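/- Let X be a real linear space, (Y, N) a fuzzy normed space, (Z, N′) a fuzzy normed space, and φ : X × X → Z. Suppose f, g, h : X → Y are odd functions such that N (f(x+y) + f(x−y) − 2g(x) − 2h(y)) t ≥ N′ (φ(x, y)) t for all x, y ∈ X and all t ∈ ℝ. Then for all x, y ∈ X and t > 0, N (f(x+y) − f(x) − f(y)) (3t) ≥ min {N′ (φ(x,y)) t, N′ (φ(y,x)) t, N′ (φ(x,0)) t, N′ (φ(0,x)) t, N′ (φ(y,0)) t, N′ (φ(0,y)) t}. -/

import Mathlib

/-!
Write `E a b = f (a + b) + f (a - b) - 2 g a - 2 h b` for the defect of the Pexider equation.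
Since `f` is odd and `g 0 + h 0 = 0`,
`2 (f (x + y) - f x - f y) = E x y + E y x - E x 0 - E 0 x - E y 0 - E 0 y`.
The six terms cost `6 t` in the triangle inequality, and cancelling the factor `2` leaves `3 t`.
-/

open Filter Finset

/-- A fuzzy norm on a real vector space, following Bag–Samanta. -/
structure IsFuzzyNorm {X : Type*} [AddCommGroup X] [Module ℝ X] (N : X → ℝ → ℝ) : Prop where
  nonneg : ∀ (x : X) (t : ℝ), 0 ≤ N x t
  le_one : ∀ (x : X) (t : ℝ), N x t ≤ 1
  eq_zero_of_nonpos : ∀ (x : X) (c : ℝ), c ≤ 0 → N x c = 0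
  eq_zero_iff : ∀ x : X, x = 0 ↔ ∀ c : ℝ, 0 < c → N x c = 1
  smul_eq : ∀ (c : ℝ) (x : X) (t : ℝ), c ≠ 0 → N (c • x) t = N x (t / |c|)
  min_le_add : ∀ (x y : X) (s t : ℝ), min (N x s) (N y t) ≤ N (x + y) (s + t)
  mono : ∀ x : X, Monotone (N x)
  tendsto_one : ∀ x : X, Tendsto (N x) atTop (nhds 1)

/-- Convergence of a sequence to a fuzzy limit in a fuzzy normed space. -/
def FuzzyTendsto {X : Type*} [AddCommGroup X] [Module ℝ X] (N : X → ℝ → ℝ)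
    (xs : ℕ → X) (x : X) : Prop :=
  ∀ t : ℝ, 0 < t → Tendsto (fun n => N (xs n - x) t) atTop (nhds 1)

/-- Cauchy sequences in a fuzzy normed space. -/
def FuzzyCauchy {X : Type*} [AddCommGroup X] [Module ℝ X] (N : X → ℝ → ℝ)
    (xs : ℕ → X) : Prop :=
  ∀ ε : ℝ, 0 < ε → ∀ t : ℝ, 0 < t → ∃ n₀ : ℕ, ∀ n ≥ n₀, ∀ p : ℕ, 0 < p →
    1 - ε < N (xs (n + p) - xs n) t

/-- A fuzzy normed space is complete (a fuzzy Banach space) if every Cauchy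
sequence converges. -/
def IsFuzzyComplete {X : Type*} [AddCommGroup X] [Module ℝ X] (N : X → ℝ → ℝ) : Prop :=
  ∀ xs : ℕ → X, FuzzyCauchy N xs → ∃ x : X, FuzzyTendsto N xs x

/-- Quadratic functional equation. -/
def IsQuadratic {X Y : Type*} [AddCommGroup X] [AddCommGroup Y] (Q : X → Y) : Prop :=
  ∀ x y : X, Q (x + y) + Q (x - y) = 2 • Q x + 2 • Q y

/-- Additive functional equation. -/
def IsAdditive {X Y : Type*} [AddCommGroup X] [AddCommGroup Y] (T : X → Y) : Prop :=
  ∀ x y : X, T (x + y) = T x + T y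

namespace IsFuzzyNorm

variable {E : Type*} [AddCommGroup E] [Module ℝ E] {N : E → ℝ → ℝ} {a r s : ℝ} {u v : E}

theorem neg_eq (hN : IsFuzzyNorm N) (v : E) (t : ℝ) : N (-v) t = N v t := by
  simpa using hN.smul_eq (-1) v t (by norm_num)

theorem nsmul_natCast_mul (hN : IsFuzzyNorm N) {n : ℕ} (hn : n ≠ 0) (v : E) (t : ℝ) :
    N (n • v) (n * t) = N v t := by
  have hn' : (n : ℝ) ≠ 0 := Nat.cast_ne_zero.mpr hn
  rw [← Nat.cast_smul_eq_nsmul ℝ, hN.smul_eq _ _ _ hn', Nat.abs_cast, mul_div_cancel_left₀ t hn']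

theorem le_add (hN : IsFuzzyNorm N) (hu : a ≤ N u r) (hv : a ≤ N v s) :
    a ≤ N (u + v) (r + s) :=
  (le_min hu hv).trans (hN.min_le_add u v r s)

theorem le_sub (hN : IsFuzzyNorm N) (hu : a ≤ N u r) (hv : a ≤ N v s) :
    a ≤ N (u - v) (r + s) := by
  rw [sub_eq_add_neg]
  exact hN.le_add hu (hv.trans_eq (hN.neg_eq v s).symm)

end IsFuzzyNorm

/-- The defect at `(x, y)` of the Pexiderized quadratic functional equation
`f (x + y) + f (x - y) = 2 g x + 2 h y`, the quantity whose fuzzy norm the hypothesis controls. -/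
def pexiderDefect {X Y : Type*} [AddCommGroup X] [AddCommGroup Y] (f g h : X → Y) (x y : X) : Y :=
  f (x + y) + f (x - y) - 2 • g x - 2 • h y

theorem two_nsmul_map_add_sub_eq_pexiderDefect {X Y : Type*} [AddCommGroup X] [AddCommGroup Y]
    {f g h : X → Y} (hf : f.Odd) (hgh : g 0 + h 0 = 0) (x y : X) :
    2 • (f (x + y) - f x - f y) =
      pexiderDefect f g h x y + pexiderDefect f g h y x
        - pexiderDefect f g h x 0 - pexiderDefect f g h 0 x
        - pexiderDefect f g h y 0 - pexiderDefect f g h 0 y := by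
  have h_swap : f (y - x) = -f (x - y) := by rw [← hf, neg_sub]
  have h_zero : h 0 = -g 0 := eq_neg_of_add_eq_zero_right hgh
  simp only [pexiderDefect, h_swap, h_zero, hf _, add_comm y x, add_zero, zero_add, sub_zero,
    zero_sub]
  abel

theorem fuzzy_pexider_odd_almost_additive_general {X Y : Type*} [AddCommGroup X]
    [AddCommGroup Y] [Module ℝ Y] {N : Y → ℝ → ℝ} (hN : IsFuzzyNorm N) {f g h : X → Y}
    (hf : f.Odd) (hgh : g 0 + h 0 = 0) {ψ : X → X → ℝ} {t : ℝ}
    (hψ : ∀ x y, ψ x y ≤ N (pexiderDefect f g h x y) t) (x y : X) :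
    min (min (min (ψ x y) (ψ y x)) (min (ψ x 0) (ψ 0 x))) (min (ψ y 0) (ψ 0 y)) ≤
      N (f (x + y) - f x - f y) (3 * t) := by
  refine le_of_forall_le fun m hm => ?_
  simp only [le_min_iff] at hm
  obtain ⟨⟨⟨hxy, hyx⟩, hx0, h0x⟩, hy0, h0y⟩ := hm
  have le_defect {a b : X} (hab : m ≤ ψ a b) : m ≤ N (pexiderDefect f g h a b) t :=
    hab.trans (hψ a b)
  have h_time : t + t + t + t + t + t = (2 : ℕ) * (3 * t) := by push_cast; ring
  rw [← hN.nsmul_natCast_mul two_ne_zero, two_nsmul_map_add_sub_eq_pexiderDefect hf hgh, ← h_time]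
  exact hN.le_sub (hN.le_sub (hN.le_sub (hN.le_sub (hN.le_add (le_defect hxy) (le_defect hyx))
    (le_defect hx0)) (le_defect h0x)) (le_defect hy0)) (le_defect h0y)

/-- Estimate (3.5) in the proof of Proposition 3.1: the odd part is approximately
additive. -/
theorem fuzzy_pexider_odd_almost_additive
    {X Y Z : Type*} [AddCommGroup X] [Module ℝ X]
    [AddCommGroup Y] [Module ℝ Y] [AddCommGroup Z] [Module ℝ Z]
    (N : Y → ℝ → ℝ) (N' : Z → ℝ → ℝ)
    (hN : IsFuzzyNorm N) (hN' : IsFuzzyNorm N')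
    (φ : X × X → Z)
    (f g h : X → Y)
    (hfodd : ∀ x : X, f (-x) = -f x)
    (hgodd : ∀ x : X, g (-x) = -g x)
    (hhodd : ∀ x : X, h (-x) = -h x)
    (hineq : ∀ x y : X, ∀ t : ℝ,
      N' (φ (x, y)) t ≤ N (f (x + y) + f (x - y) - 2 • g x - 2 • h y) t) :
    ∀ x y : X, ∀ t : ℝ, 0 < t →
      min (min (min (N' (φ (x, y)) t) (N' (φ (y, x)) t))
          (min (N' (φ (x, 0)) t) (N' (φ (0, x)) t)))
        (min (N' (φ (y, 0)) t) (N' (φ (0, y)) t)) ≤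
      N (f (x + y) - f x - f y) (3 * t) := by
  have : IsAddTorsionFree Y := .of_isTorsionFree ℝ Y
  have hgh : g 0 + h 0 = 0 := by
    rw [Function.Odd.map_zero hgodd, Function.Odd.map_zero hhodd, add_zero]
  exact fun x y t _ => fuzzy_pexider_odd_almost_additive_general hN hfodd hgh
    (ψ := fun a b => N' (φ (a, b)) t) (fun a b => hineq a b t) x y
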